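/- Let X ∈ D^k(H)^-. Then for every r ∈ [0,1), ((1−r)/(1+r))^k · I ≤ 𝒫(R, rX) ≤ ((1+r)/(1−r))^k · I in the operator order on ℓ²(ℕ^k; H). -/

import Mathlib

open ContinuousLinearMap

noncomputable section

/-- `ℓ²(ℕ^k; H)`. -/
abbrev L2 (k : ℕ) (H : Type*) [NormedAddCommGroup H] : Type _ :=
  lp (fun _ : Fin k → ℕ => H) 2

variable {k : ℕ} {H : Type*} [NormedAddCommGroup H] [InnerProductSpace ℂ H] [CompleteSpace H]

/-- The Loewner (operator) order: `S ≤ T` iff `T - S` is a positive operator. -/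
def opLE {E : Type*} [NormedAddCommGroup E] [InnerProductSpace ℂ E] [CompleteSpace E]
    (S T : E →L[ℂ] E) : Prop := (T - S).IsPositive

/-- The defect operator `Δ_X(I) = (id - Φ_{X_1}) ∘ ⋯ ∘ (id - Φ_{X_k})(I)`,
where `Φ_{X_i}(Y) = X_i Y X_i*`. -/
def defect (X : Fin k → (H →L[ℂ] H)) : H →L[ℂ] H :=
  ((List.ofFn fun i => fun Y : H →L[ℂ] H => Y - X i * Y * adjoint (X i)).foldr (· ∘ ·) id) 1

/-- Membership in the regular polydisk `D^k(H)`: pairwise commuting operators of norm `< 1`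
with positive invertible defect operator. -/
def memPolydisk (X : Fin k → (H →L[ℂ] H)) : Prop :=
  (∀ i j, Commute (X i) (X j)) ∧ (∀ i, ‖X i‖ < 1) ∧
    (defect X).IsPositive ∧ IsUnit (defect X)

/-- Membership in the closed regular polydisk `D^k(H)⁻`: pairwise commuting contractions `X`
with `rX ∈ D^k(H)` for all `r ∈ (0,1)`. -/
def memClosedPolydisk (X : Fin k → (H →L[ℂ] H)) : Prop :=
  (∀ i j, Commute (X i) (X j)) ∧ (∀ i, ‖X i‖ ≤ 1) ∧
    ∀ r ∈ Set.Ioo (0 : ℝ) 1, memPolydisk (fun i => ((r : ℂ) • X i))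

/-- `P` is the pluriharmonic Poisson kernel `𝒫(R, rX)` on `ℓ²(ℕ^k; H)`: it is characterized by
`⟨𝒫(R,rX)(δ_β h), δ_α ℓ⟩ = r^{Σ|α_i - β_i|} ⟨(∏ X_i^{(β_i-α_i)⁺})(∏ (X_i*)^{(α_i-β_i)⁺}) h, ℓ⟩`. -/
def IsPoissonKernel (X : Fin k → (H →L[ℂ] H)) (r : ℝ)
    (P : L2 k H →L[ℂ] L2 k H) : Prop :=
  ∀ (α β : Fin k → ℕ) (h ℓ : H),
    inner (𝕜 := ℂ) (P (lp.single 2 β h)) (lp.single 2 α ℓ) =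
      ((r ^ (∑ i, ((α i - β i) + (β i - α i))) : ℝ) : ℂ) *
        inner (𝕜 := ℂ)
          (((List.ofFn fun i => X i ^ (β i - α i)).prod *
            (List.ofFn fun i => (adjoint (X i)) ^ (α i - β i)).prod) h) ℓ

/-- The two-sided Harnack-type domination `c⁻² 𝒫(R,rB) ≤ 𝒫(R,rA) ≤ c² 𝒫(R,rB)` for all
`r ∈ [0,1)`, expressed in terms of the Poisson kernel families. -/
def PoissonSandwich (PA PB : ℝ → (L2 k H →L[ℂ] L2 k H)) (c : ℝ) : Prop :=
  ∀ r ∈ Set.Ico (0 : ℝ) 1,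
    opLE (((c : ℂ) ^ 2)⁻¹ • PB r) (PA r) ∧ opLE (PA r) (((c : ℂ) ^ 2) • PB r)

/-- Poisson equivalence of two points, expressed via their Poisson kernel families. -/
def PoissonEquiv (PA PB : ℝ → (L2 k H →L[ℂ] L2 k H)) : Prop :=
  ∃ c : ℝ, 1 ≤ c ∧ PoissonSandwich PA PB c

/-- The Poisson distance `δ_P`, expressed via the Poisson kernel families. -/
def deltaP (PA PB : ℝ → (L2 k H →L[ℂ] L2 k H)) : ℝ :=
  Real.log (sInf {c : ℝ | 1 ≤ c ∧ PoissonSandwich PA PB c})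

/-!
The Poisson kernel `𝒫(R, rX)` is the Schur product of two kernels on `ℕ^k`: the scalar Poisson
kernel of the polydisk at the point `(r, …, r)`, which is a `k`-fold Kronecker product of matrices
`(r ^ |a - b|)`, and the operator-valued kernel
`K_X(α, β) = (∏ X_i ^ (β_i - α_i)⁺) (∏ X_i* ^ (α_i - β_i)⁺)`.

Each matrix `(r ^ |a - b|)` consists of the moments of the classical Poisson kernel on the circle,
so the classical Harnack bounds put it between `((1 - r) / (1 + r)) I` and
`((1 + r) / (1 - r)) I`; by the Schur product theorem these bounds multiply. The kernel `K_X` is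
positive semidefinite with `K_X(α, α) = I`: if `‖Y‖ < 1`, a matrix `G` with `G - Y G Y*` positive
is the sum of the geometric series `∑ Y ^ m (G - Y G Y*) (Y*) ^ m`, so positivity of the defect
operator propagates to `K_X` one variable at a time for points of `D^k(H)`, and then passes to the
closure. Schur multiplication by `K_X` therefore preserves the scalar inequalities and fixes `I`.
-/

open Filter Topology
open scoped ComplexOrder MatrixOrder

section PosSemidef
variable {ι R : Type*} [Ring R] [PartialOrder R] [StarRing R]

theorem posSemidef_iff_forall_finset_sum {K : Matrix ι ι R} :
    K.PosSemidef ↔ K.IsHermitian ∧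
      ∀ (s : Finset ι) (x : ι → R), 0 ≤ ∑ i ∈ s, ∑ j ∈ s, star (x i) * K i j * x j := by
  refine and_congr_right fun _ => ⟨fun h s x => ?_, fun h x => h x.support x⟩
  have hx := h (Finsupp.indicator s fun i _ => x i)
  simp only [Finsupp.sum_indicator_index_eq_sum_attach, zero_mul, mul_zero, star_zero,
    Finset.sum_const_zero, implies_true] at hx
  simpa only [← Finset.sum_attach s] using hx

theorem posSemidef_diagonal_conj {K : Matrix ι ι R} (hK : K.PosSemidef) (V : ι → R) :
    (Matrix.of fun i j => V i * K i j * star (V j)).PosSemidef := by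
  rw [posSemidef_iff_forall_finset_sum] at hK ⊢
  refine ⟨Matrix.IsHermitian.ext fun i j => ?_, fun s x => ?_⟩
  · simp [mul_assoc, hK.1.apply]
  · simpa [mul_assoc] using hK.2 s fun i => star (V i) * x i

theorem isClosed_setOf_posSemidef [TopologicalSpace R] [IsTopologicalRing R] [ContinuousStar R]
    [OrderClosedTopology R] : IsClosed {K : Matrix ι ι R | K.PosSemidef} := by
  simp only [posSemidef_iff_forall_finset_sum, Set.ofPred_and, Set.ofPred_forall]
  refine IsClosed.inter ?_ (isClosed_iInter fun s => isClosed_iInter fun x => ?_)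
  · exact isClosed_eq continuous_id.matrix_conjTranspose continuous_id
  · exact isClosed_le continuous_const (by fun_prop)

theorem posSemidef_of_tendsto [TopologicalSpace R] [IsTopologicalRing R] [ContinuousStar R]
    [OrderClosedTopology R] {γ : Type*} {l : Filter γ} [l.NeBot] {F : γ → Matrix ι ι R}
    {K : Matrix ι ι R} (hlim : Tendsto F l (𝓝 K)) (hF : ∀ᶠ n in l, (F n).PosSemidef) :
    K.PosSemidef :=
  isClosed_setOf_posSemidef (R := R).mem_of_tendsto hlim hF

variable [StarOrderedRing R]

theorem posSemidef_of_const {D : R} (hD : 0 ≤ D) :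
    (Matrix.of fun _ _ : ι => D).PosSemidef := by
  classical
  have hdiag : (Matrix.diagonal fun _ : Unit => D).PosSemidef := .diagonal fun _ => hD
  convert hdiag.submatrix fun _ : ι => ()
  simp [← Matrix.ext_iff]

theorem posSemidef_schurProduct [Algebra ℂ R] [StarModule ℂ R] {w : Matrix ι ι ℂ}
    {K : Matrix ι ι R} (hw : w.PosSemidef) (hK : K.PosSemidef) :
    (Matrix.of fun i j => w i j • K i j).PosSemidef := by
  classical
  rw [posSemidef_iff_forall_finset_sum]
  refine ⟨Matrix.IsHermitian.ext fun i j => ?_, fun s x => ?_⟩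
  · simp only [Matrix.of_apply, star_smul, ← hK.1.apply i j, ← hw.1.apply i j]
  obtain ⟨B, hB⟩ := CStarAlgebra.nonneg_iff_eq_star_mul_self.mp
    (hw.submatrix (Subtype.val : s → ι)).nonneg
  have hwB (i j : s) : w i j = ∑ m, star (B m i) * B m j := by
    simpa [Matrix.mul_apply, Matrix.star_eq_conjTranspose] using congrFun₂ hB i j
  calc
    0 ≤ ∑ m, ∑ i ∈ s.attach, ∑ j ∈ s.attach, star (B m i • x i) * K i j * (B m j • x j) :=
      Finset.sum_nonneg fun m _ =>
        (posSemidef_iff_forall_finset_sum.mp (hK.submatrix (Subtype.val : s → ι))).2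
          s.attach fun i => B m i • x i
    _ = ∑ i ∈ s, ∑ j ∈ s, star (x i) * (w i j • K i j) * x j := by
      simp only [← Finset.sum_attach s]
      rw [Finset.sum_comm]
      refine Finset.sum_congr rfl fun i _ => ?_
      rw [Finset.sum_comm]
      refine Finset.sum_congr rfl fun j _ => ?_
      simp only [hwB, star_smul, smul_mul_assoc, mul_smul_comm, smul_smul, ← Finset.sum_smul,
        mul_comm]

end PosSemidef

section OperatorKernel
variable {ι A : Type*}

theorem mul_sub_conj_mul [Ring A] {x y p q : A} (hp : Commute x p) (hq : Commute y q) (D : A) :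
    p * (D - x * D * y) * q = p * D * q - x * (p * D * q) * y := by
  calc
    p * (D - x * D * y) * q = p * D * q - p * x * D * (y * q) := by noncomm_ring
    _ = p * D * q - x * p * D * (q * y) := by rw [hp.eq, hq.eq]
    _ = p * D * q - x * (p * D * q) * y := by noncomm_ring

section Algebra
variable [Ring A] [StarRing A]

theorem sum_range_shift_conj (Y G : A) {a b N : ℕ} (hN : max a b ≤ N) :
    ∑ m ∈ Finset.range N, (if a ≤ m then Y ^ (m - a) else 0) * (G - Y * G * star Y) *
        star (if b ≤ m then Y ^ (m - b) else 0) =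
      Y ^ (b - a) * G * star Y ^ (a - b) - Y ^ (N - a) * G * star Y ^ (N - b) := by
  induction N, hN using Nat.le_induction with
  | base =>
    have hvanish : ∀ m ∈ Finset.range (max a b), (if a ≤ m then Y ^ (m - a) else 0) *
        (G - Y * G * star Y) * star (if b ≤ m then Y ^ (m - b) else 0) = 0 := fun m hm => by
      rcases lt_max_iff.mp (Finset.mem_range.mp hm) with h | h <;> simp [h.not_ge]
    rw [Finset.sum_eq_zero hvanish, show max a b - a = b - a by omega,
      show max a b - b = a - b by omega, sub_self]
  | succ N hN ih =>
    have ha : a ≤ N := le_of_max_le_left hN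
    have hb : b ≤ N := le_of_max_le_right hN
    rw [Finset.sum_range_succ, ih, if_pos ha, if_pos hb, star_pow, Nat.sub_add_comm ha,
      Nat.sub_add_comm hb, pow_succ, pow_succ']
    noncomm_ring

/-- The iterated defect `((id - Φ_{X i₁}) ∘ ⋯ ∘ (id - Φ_{X iₙ})) D` along the list
`l = [i₁, …, iₙ]`, where `Φ_Y(D) = Y D Y*`. -/
def iteratedDefect (X : ι → A) (l : List ι) (D : A) : A :=
  l.foldr (fun i Y => Y - X i * Y * star (X i)) D

/-- The matrix on multi-indices whose `(α, β)` entry is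
`(∏ X i ^ (β i - α i)⁺) D (∏ (X i)* ^ (α i - β i)⁺)`, both products running over `l`; for `D = 1`
this is the operator part of the pluriharmonic Poisson kernel. -/
def toeplitzKernel (X : ι → A) (l : List ι) (D : A) : Matrix (ι → ℕ) (ι → ℕ) A :=
  Matrix.of fun α β =>
    l.foldr (fun i Y => X i ^ (β i - α i) * Y * star (X i) ^ (α i - β i)) D

theorem toeplitzKernel_apply_self (X : ι → A) (l : List ι) (D : A) (α : ι → ℕ) :
    toeplitzKernel X l D α α = D := by
  induction l <;> simp_all [toeplitzKernel]

theorem continuous_toeplitzKernel [TopologicalSpace A] [ContinuousMul A] [ContinuousStar A]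
    (l : List ι) (D : A) : Continuous fun X : ι → A => toeplitzKernel X l D := by
  refine continuous_matrix fun α β => ?_
  induction l with
  | nil => exact continuous_const
  | cons i l ih =>
    exact (((continuous_apply i).pow _).mul ih).mul ((continuous_apply i).star.pow _)

variable {X : ι → A} (hcomm : ∀ i j, Commute (X i) (X j))
include hcomm

theorem iteratedDefect_sub_conj (i : ι) (l : List ι) (D : A) :
    iteratedDefect X l (D - X i * D * star (X i)) = iteratedDefect X (i :: l) D := by
  refine List.foldr_hom (fun Y => Y - X i * Y * star (X i)) fun j Y => ?_
  rw [mul_sub_conj_mul (hcomm i j) (hcomm i j).star_star]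
  noncomm_ring

theorem toeplitzKernel_sub_conj (i : ι) (l : List ι) (D : A) (α β : ι → ℕ) :
    toeplitzKernel X l (D - X i * D * star (X i)) α β =
      toeplitzKernel X l D α β - X i * toeplitzKernel X l D α β * star (X i) :=
  List.foldr_hom (fun Y => Y - X i * Y * star (X i)) fun j Y =>
    mul_sub_conj_mul ((hcomm i j).pow_right _) ((hcomm i j).star_star.pow_right _) Y

theorem toeplitzKernel_one_apply (l : List ι) (α β : ι → ℕ) :
    toeplitzKernel X l 1 α β =
      (l.map fun i => X i ^ (β i - α i)).prod * (l.map fun i => star (X i) ^ (α i - β i)).prod := by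
  induction l with
  | nil => simp [toeplitzKernel]
  | cons i l ih =>
    have hpow : Commute (star (X i) ^ (α i - β i))
        (l.map fun j => star (X j) ^ (α j - β j)).prod :=
      Commute.list_prod_right _ _ fun y hy => by
        obtain ⟨j, -, rfl⟩ := List.mem_map.mp hy
        exact (hcomm i j).star_star.pow_pow _ _
    have hcons : toeplitzKernel X (i :: l) 1 α β =
        X i ^ (β i - α i) * toeplitzKernel X l 1 α β * star (X i) ^ (α i - β i) := rfl
    rw [hcons, ih, List.map_cons, List.map_cons, List.prod_cons, List.prod_cons, hpow.eq]
    simp only [mul_assoc]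

end Algebra

variable [NormedRing A] [StarRing A] [NormedStarGroup A]

theorem tendsto_sum_range_shift_conj {Y : A} (hY : ‖Y‖ < 1) (G : A) (a b : ℕ) :
    Tendsto (fun N => ∑ m ∈ Finset.range N, (if a ≤ m then Y ^ (m - a) else 0) *
      (G - Y * G * star Y) * star (if b ≤ m then Y ^ (m - b) else 0))
      atTop (𝓝 (Y ^ (b - a) * G * star Y ^ (a - b))) := by
  have hpow (c : ℕ) {Z : A} (hZ : ‖Z‖ < 1) : Tendsto (fun N => Z ^ (N - c)) atTop (𝓝 0) :=
    (tendsto_pow_atTop_nhds_zero_of_norm_lt_one hZ).comp (tendsto_sub_atTop_nat c)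
  have hlim := (((hpow a hY).mul_const G).mul
    (hpow b ((norm_star Y).trans_lt hY))).const_sub (Y ^ (b - a) * G * star Y ^ (a - b))
  rw [zero_mul, zero_mul, sub_zero] at hlim
  refine hlim.congr' ?_
  filter_upwards [eventually_ge_atTop (max a b)] with N hN
  exact (sum_range_shift_conj Y G hN).symm

variable [PartialOrder A] [StarOrderedRing A] [OrderClosedTopology A]

/-- Writing `Γ = G - Y G Y*`, the matrix is the convergent sum `∑ m, V m α * Γ α β * (V m β)*` with
`V m α = Y ^ (m - a α)` for `a α ≤ m` and `V m α = 0` otherwise. -/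
theorem posSemidef_pow_conj {κ : Type*} {Y : A} (hY : ‖Y‖ < 1) {G : Matrix κ κ A}
    (hG : (Matrix.of fun α β => G α β - Y * G α β * star Y).PosSemidef) (a : κ → ℕ) :
    (Matrix.of fun α β => Y ^ (a β - a α) * G α β * star Y ^ (a α - a β)).PosSemidef := by
  let V (m : ℕ) (α : κ) : A := if a α ≤ m then Y ^ (m - a α) else 0
  let S (N : ℕ) : Matrix κ κ A := ∑ m ∈ Finset.range N,
    Matrix.of fun α β => V m α * (G α β - Y * G α β * star Y) * star (V m β)
  have hS (N : ℕ) : (S N).PosSemidef :=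
    Matrix.posSemidef_sum _ fun m _ => posSemidef_diagonal_conj hG (V m)
  refine posSemidef_of_tendsto (F := S) (l := atTop)
    (tendsto_pi_nhds.mpr fun α => tendsto_pi_nhds.mpr fun β => ?_) (.of_forall hS)
  simpa only [S, V, Matrix.sum_apply, Matrix.of_apply] using
    tendsto_sum_range_shift_conj hY (G α β) (a α) (a β)

theorem posSemidef_toeplitzKernel {X : ι → A} (hcomm : ∀ i j, Commute (X i) (X j))
    (hX : ∀ i, ‖X i‖ < 1) {l : List ι} {D : A} (hD : 0 ≤ iteratedDefect X l D) :
    (toeplitzKernel X l D).PosSemidef := by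
  induction l generalizing D with
  | nil => exact posSemidef_of_const hD
  | cons i l ih =>
    refine posSemidef_pow_conj (hX i) (G := toeplitzKernel X l D) ?_ fun α => α i
    simp only [← toeplitzKernel_sub_conj hcomm]
    exact ih (by rwa [iteratedDefect_sub_conj hcomm])

end OperatorKernel

section PoissonMoments
open ComplexConjugate Metric Real

/-- The Toeplitz matrix of trigonometric moments, over the unit circle, of the density `g`. -/
def momentMatrix (g : ℂ → ℝ) : Matrix ℕ ℕ ℂ :=
  Matrix.of fun a b => circleAverage (fun z => g z • (conj z ^ a * z ^ b)) 0 1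

theorem circleIntegrable_smul_monomial {g : ℂ → ℝ} (hg : ContinuousOn g (sphere 0 1))
    (a b : ℕ) : CircleIntegrable (fun z => g z • (conj z ^ a * z ^ b)) 0 1 :=
  ContinuousOn.circleIntegrable zero_le_one (hg.smul (by fun_prop))

theorem momentMatrix_congr {f g : ℂ → ℝ} (h : Set.EqOn f g (sphere 0 1)) :
    momentMatrix f = momentMatrix g := by
  ext a b
  simp only [momentMatrix, Matrix.of_apply]
  refine circleAverage_congr_sphere fun z hz => ?_
  rw [abs_one] at hz
  simp only [h hz]

theorem isHermitian_momentMatrix {g : ℂ → ℝ} (hg : ContinuousOn g (sphere 0 1)) :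
    (momentMatrix g).IsHermitian := by
  refine Matrix.IsHermitian.ext fun a b => ?_
  have hconj := (Complex.conjCLE : ℂ →L[ℝ] ℂ).circleAverage_comp_comm
    (circleIntegrable_smul_monomial hg b a)
  refine hconj.symm.trans ?_
  simp [momentMatrix, Function.comp_def, mul_comm]

theorem posSemidef_momentMatrix {g : ℂ → ℝ} (hg : ContinuousOn g (sphere 0 1))
    (hpos : ∀ z ∈ sphere (0 : ℂ) 1, 0 ≤ g z) : (momentMatrix g).PosSemidef := by
  refine posSemidef_iff_forall_finset_sum.mpr ⟨isHermitian_momentMatrix hg, fun s x => ?_⟩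
  have hterm (z : ℂ) : ∑ a ∈ s, ∑ b ∈ s, (star (x a) * x b) • g z • (conj z ^ a * z ^ b) =
      ((g z * ‖∑ a ∈ s, x a * z ^ a‖ ^ 2 : ℝ) : ℂ) := by
    push_cast
    rw [← Complex.conj_mul', map_sum, Finset.sum_mul_sum, Finset.mul_sum]
    simp [Finset.mul_sum, mul_assoc, mul_left_comm]
  have hint (a b : ℕ) :
      CircleIntegrable (fun z => (star (x a) * x b) • g z • (conj z ^ a * z ^ b)) 0 1 :=
    (circleIntegrable_smul_monomial hg a b).const_smul
  have hreal : CircleIntegrable (fun z => g z * ‖∑ a ∈ s, x a * z ^ a‖ ^ 2) 0 1 :=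
    ContinuousOn.circleIntegrable zero_le_one (hg.mul (by fun_prop))
  calc
    (0 : ℂ) ≤ ((circleAverage (fun z => g z * ‖∑ a ∈ s, x a * z ^ a‖ ^ 2) 0 1 : ℝ) : ℂ) := by
      refine Complex.zero_le_real.mpr (circleAverage_nonneg_of_nonneg fun z hz => ?_)
      rw [abs_one] at hz
      exact mul_nonneg (hpos z hz) (sq_nonneg _)
    _ = circleAverage (fun z => ∑ a ∈ s, ∑ b ∈ s,
          (star (x a) * x b) • g z • (conj z ^ a * z ^ b)) 0 1 := by
      simp only [hterm]
      exact (Complex.ofRealCLM.circleAverage_comp_comm hreal).symm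
    _ = ∑ a ∈ s, ∑ b ∈ s, star (x a) * momentMatrix g a b * x b := by
      rw [circleAverage_fun_sum fun a _ => .fun_sum s fun b _ => hint a b]
      refine Finset.sum_congr rfl fun a _ => ?_
      rw [circleAverage_fun_sum fun b _ => hint a b]
      refine Finset.sum_congr rfl fun b _ => ?_
      rw [circleAverage_fun_smul, smul_eq_mul, mul_right_comm]
      rfl

theorem momentMatrix_mono {f g : ℂ → ℝ} (hf : ContinuousOn f (sphere 0 1))
    (hg : ContinuousOn g (sphere 0 1)) (hle : ∀ z ∈ sphere (0 : ℂ) 1, f z ≤ g z) :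
    momentMatrix f ≤ momentMatrix g := by
  have hsub : momentMatrix (g - f) = momentMatrix g - momentMatrix f := by
    ext a b
    simp only [momentMatrix, Matrix.sub_apply, Matrix.of_apply, Pi.sub_apply, sub_smul]
    exact circleAverage_fun_sub (circleIntegrable_smul_monomial hg a b)
      (circleIntegrable_smul_monomial hf a b)
  rw [Matrix.le_iff, ← hsub]
  exact posSemidef_momentMatrix (hg.sub hf) fun z hz => sub_nonneg.mpr (hle z hz)

theorem continuousOn_poissonKernel_sphere {c w : ℂ} {R : ℝ} (hw : w ∈ ball c R) :
    ContinuousOn (poissonKernel c w) (sphere c R) := by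
  rw [poissonKernel_eq_re_herglotzRieszKernel, ← abs_of_pos (pos_of_mem_ball hw)]
  exact Complex.continuous_re.comp_continuousOn (continuousOn_herglotzRieszKernel_sphere hw)

/-- The Poisson kernel of one variable as a Toeplitz matrix on `ℕ`, whose `(a, b)` entry is
`conj w ^ (a - b)⁺ * w ^ (b - a)⁺`. -/
def poissonMatrix (w : ℂ) : Matrix ℕ ℕ ℂ :=
  Matrix.of fun a b => conj w ^ (a - b) * w ^ (b - a)

theorem momentMatrix_poissonKernel {w : ℂ} (hw : w ∈ ball 0 1) :
    momentMatrix (poissonKernel 0 w) = poissonMatrix w := by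
  have hherm : (momentMatrix (poissonKernel 0 w)).IsHermitian :=
    isHermitian_momentMatrix (continuousOn_poissonKernel_sphere hw)
  ext a b
  wlog hab : a ≤ b generalizing a b
  · rw [← hherm.apply, this b a (by lia)]
    simp [poissonMatrix, mul_comm]
  have hdiff : DiffContOnCl ℂ (fun z : ℂ => z ^ (b - a)) (ball 0 1) :=
    (differentiable_pow _).diffContOnCl
  simp only [poissonMatrix, momentMatrix, Matrix.of_apply]
  rw [Nat.sub_eq_zero_of_le hab, pow_zero, one_mul, ← hdiff.circleAverage_poissonKernel_smul hw]
  refine circleAverage_congr_sphere fun z hz => ?_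
  have hz' : conj z * z = 1 := by simp_all [Complex.conj_mul']
  obtain ⟨c, rfl⟩ := Nat.exists_eq_add_of_le hab
  simp [pow_add, ← mul_assoc, ← mul_pow, hz']

theorem poissonMatrix_zero : poissonMatrix 0 = 1 := by
  ext a b
  obtain rfl | hab := eq_or_ne a b
  · simp [poissonMatrix]
  · rcases hab.lt_or_gt with h | h <;> simp [poissonMatrix, hab, Nat.sub_ne_zero_of_lt h]

theorem momentMatrix_const (c : ℝ) : momentMatrix (fun _ => c) = (c : ℂ) • 1 := by
  have hone : Set.EqOn (fun _ => c) (c • poissonKernel 0 0) (sphere 0 1) := fun z hz => by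
    simp_all [poissonKernel]
  rw [momentMatrix_congr hone, ← poissonMatrix_zero,
    ← momentMatrix_poissonKernel (mem_ball_self one_pos)]
  ext a b
  simp only [momentMatrix, Matrix.smul_apply, Matrix.of_apply, Pi.smul_apply, smul_assoc,
    Complex.coe_smul, circleAverage_fun_smul]

theorem smul_one_le_poissonMatrix {w : ℂ} (hw : w ∈ ball 0 1) :
    (((1 - ‖w‖) / (1 + ‖w‖) : ℝ) : ℂ) • 1 ≤ poissonMatrix w := by
  rw [← momentMatrix_const, ← momentMatrix_poissonKernel hw]
  refine momentMatrix_mono continuousOn_const (continuousOn_poissonKernel_sphere hw)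
    fun z hz => ?_
  simpa [poissonKernel_eq_re_herglotzRieszKernel, herglotzRieszKernel] using
    le_re_herglotzRieszKernel hz hw

theorem one_sub_div_one_add_smul_one_nonneg {w : ℂ} (hw : w ∈ ball 0 1) :
    (0 : Matrix ℕ ℕ ℂ) ≤ (((1 - ‖w‖) / (1 + ‖w‖) : ℝ) : ℂ) • 1 := by
  have hlt : ‖w‖ < 1 := mem_ball_zero_iff.mp hw
  have hc : 0 ≤ (1 - ‖w‖) / (1 + ‖w‖) := div_nonneg (by linarith) (by positivity)
  exact (Matrix.PosSemidef.one.smul (Complex.zero_le_real.mpr hc)).nonneg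

theorem poissonMatrix_nonneg {w : ℂ} (hw : w ∈ ball 0 1) : 0 ≤ poissonMatrix w :=
  (one_sub_div_one_add_smul_one_nonneg hw).trans (smul_one_le_poissonMatrix hw)

theorem poissonMatrix_le_smul_one {w : ℂ} (hw : w ∈ ball 0 1) :
    poissonMatrix w ≤ (((1 + ‖w‖) / (1 - ‖w‖) : ℝ) : ℂ) • 1 := by
  rw [← momentMatrix_const, ← momentMatrix_poissonKernel hw]
  refine momentMatrix_mono (continuousOn_poissonKernel_sphere hw) continuousOn_const
    fun z hz => ?_
  simpa [poissonKernel_eq_re_herglotzRieszKernel, herglotzRieszKernel] using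
    re_herglotzRieszKernel_le hz hw

end PoissonMoments

section HadamardProduct
variable {ι n 𝕜 : Type*} [RCLike 𝕜] {s : Finset ι} {u v : ι → Matrix n n 𝕜}

theorem hadamard_prod_nonneg (hv : ∀ i ∈ s, 0 ≤ v i) :
    0 ≤ Matrix.of fun a b => ∏ i ∈ s, v i a b := by
  simp only [Matrix.nonneg_iff_posSemidef] at hv ⊢
  induction s using Finset.cons_induction with
  | empty => exact posSemidef_of_const zero_le_one
  | cons i s hi ih =>
    rw [Finset.forall_mem_cons] at hv
    simp only [Finset.prod_cons]
    exact Matrix.PosSemidef.hadamard hv.1 (ih hv.2)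

/-- The increment of a product is `(u i - v i) * ∏ u + v i * (∏ u - ∏ v)`, to which the Schur
product theorem applies termwise. -/
theorem hadamard_prod_le_hadamard_prod (hv : ∀ i ∈ s, 0 ≤ v i) (hvu : ∀ i ∈ s, v i ≤ u i) :
    (Matrix.of fun a b => ∏ i ∈ s, v i a b) ≤ Matrix.of fun a b => ∏ i ∈ s, u i a b := by
  induction s using Finset.cons_induction with
  | empty => exact le_rfl
  | cons i s hi ih =>
    rw [Finset.forall_mem_cons] at hv hvu
    have hu : 0 ≤ Matrix.of fun a b => ∏ i ∈ s, u i a b :=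
      hadamard_prod_nonneg fun j hj => (hv.2 j hj).trans (hvu.2 j hj)
    have hadd := ((Matrix.le_iff.mp hvu.1).hadamard (Matrix.nonneg_iff_posSemidef.mp hu)).add
      ((Matrix.nonneg_iff_posSemidef.mp hv.1).hadamard (Matrix.le_iff.mp (ih hv.2 hvu.2)))
    rw [Matrix.le_iff]
    convert hadd using 1
    ext a b
    simp only [Finset.prod_cons, Matrix.add_apply, Matrix.hadamard_apply, Matrix.sub_apply,
      Matrix.of_apply]
    ring

/-- The Kronecker product of a finite family of matrices, with entries indexed by multi-indices. -/
def piKronecker [Fintype ι] (v : ι → Matrix n n 𝕜) : Matrix (ι → n) (ι → n) 𝕜 :=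
  Matrix.of fun α β => ∏ i, v i (α i) (β i)

theorem piKronecker_mono [Fintype ι] (hv : ∀ i, 0 ≤ v i) (hvu : ∀ i, v i ≤ u i) :
    piKronecker v ≤ piKronecker u := by
  let f (i : ι) (α : ι → n) : n := α i
  exact hadamard_prod_le_hadamard_prod (s := .univ)
    (v := fun i => (v i).submatrix (f i) (f i)) (u := fun i => (u i).submatrix (f i) (f i))
    (fun i _ => ((Matrix.nonneg_iff_posSemidef.mp (hv i)).submatrix (f i)).nonneg)
    fun i _ => Matrix.le_iff.mpr ((Matrix.le_iff.mp (hvu i)).submatrix (f i))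

theorem piKronecker_smul_one [Fintype ι] [DecidableEq n] (c : ι → 𝕜) :
    piKronecker (fun i => c i • (1 : Matrix n n 𝕜)) = (∏ i, c i) • 1 := by
  ext α β
  simp only [piKronecker, Matrix.of_apply, Matrix.smul_apply, Matrix.one_apply, smul_eq_mul,
    Finset.prod_mul_distrib, Fintype.prod_ite_zero, Finset.prod_const_one, funext_iff]

end HadamardProduct

section BlockOperators
variable {ι H : Type*} [NormedAddCommGroup H] [InnerProductSpace ℂ H]

theorem sum_inner_nonneg_of_posSemidef [CompleteSpace H] {K : Matrix ι ι (H →L[ℂ] H)}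
    (hK : K.PosSemidef) (s : Finset ι) (v : ι → H) :
    0 ≤ ∑ α ∈ s, ∑ β ∈ s, inner ℂ (K α β (v β)) (v α) := by
  have hreal : star (∑ α ∈ s, ∑ β ∈ s, inner ℂ (K α β (v β)) (v α)) =
      ∑ α ∈ s, ∑ β ∈ s, inner ℂ (K α β (v β)) (v α) := by
    simp only [star_sum]
    rw [Finset.sum_comm]
    refine Finset.sum_congr rfl fun β _ => Finset.sum_congr rfl fun α _ => ?_
    rw [← hK.1.apply α β, star_eq_adjoint, adjoint_inner_left]
    exact inner_conj_symm (𝕜 := ℂ) (K β α (v α)) (v β)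
  have htfae := (RKHS.posSemidef_tfae (𝕜 := ℂ) (V := H) (K := K)).out 0 2
  have hre := (htfae.mp hK).2 (Finsupp.indicator s fun i _ => v i)
  simp only [Finsupp.sum_indicator_index_eq_sum_attach, map_zero, inner_zero_left,
    inner_zero_right, Finset.sum_const_zero, implies_true] at hre
  rw [Finset.sum_comm] at hre
  refine Complex.nonneg_iff.mpr ⟨?_, (Complex.conj_eq_iff_im.mp hreal).symm⟩
  simp only [← Finset.sum_attach s]
  exact hre

variable [DecidableEq ι]

/-- `K` is the matrix of operator blocks of `T` with respect to the summands of `ℓ²(ι; H)`. -/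
def HasBlockMatrix (T : lp (fun _ : ι => H) 2 →L[ℂ] lp (fun _ : ι => H) 2)
    (K : Matrix ι ι (H →L[ℂ] H)) : Prop :=
  ∀ (α β : ι) (h ℓ : H),
    inner ℂ (T (lp.single 2 β h)) (lp.single 2 α ℓ) = inner ℂ (K α β h) ℓ

variable {S T : lp (fun _ : ι => H) 2 →L[ℂ] lp (fun _ : ι => H) 2} {K L : Matrix ι ι (H →L[ℂ] H)}

theorem HasBlockMatrix.sub (hS : HasBlockMatrix S K) (hT : HasBlockMatrix T L) :
    HasBlockMatrix (S - T) (K - L) := fun α β h ℓ => by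
  simp only [sub_apply, inner_sub_left, Matrix.sub_apply, hS α β h ℓ, hT α β h ℓ]

theorem hasBlockMatrix_smul_one (c : ℂ) (hK : ∀ α, K α α = 1) :
    HasBlockMatrix (c • 1) (Matrix.of fun α β => (c • (1 : Matrix ι ι ℂ)) α β • K α β) :=
  fun α β h ℓ => by
    obtain rfl | hαβ := eq_or_ne α β
    · simp [hK, lp.inner_single_right]
    · simp [lp.inner_single_right, hαβ]

variable [CompleteSpace H]

theorem HasBlockMatrix.isPositive (hT : HasBlockMatrix T K) (hK : K.PosSemidef) :
    T.IsPositive := by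
  rw [isPositive_iff_complex]
  intro f
  suffices h : 0 ≤ inner ℂ (T f) f from
    ⟨(Complex.eq_re_of_ofReal_le h).symm, (Complex.le_def.mp h).1⟩
  have hfin (s : Finset ι) : 0 ≤ inner ℂ (T (∑ β ∈ s, lp.single 2 β (f β)))
      (∑ α ∈ s, lp.single 2 α (f α)) := by
    simp only [map_sum, sum_inner, inner_sum, hT _ _ _ _]
    exact sum_inner_nonneg_of_posSemidef hK s f
  have hlim := lp.hasSum_single (by simp) f
  exact ge_of_tendsto' (((T.continuous.tendsto f).comp hlim).inner hlim) hfin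

theorem HasBlockMatrix.isPositive_sub_of_le {v w : Matrix ι ι ℂ}
    (hS : HasBlockMatrix S (.of fun α β => v α β • K α β))
    (hT : HasBlockMatrix T (.of fun α β => w α β • K α β)) (hvw : v ≤ w)
    (hK : K.PosSemidef) : (T - S).IsPositive := by
  refine (hT.sub hS).isPositive ?_
  convert posSemidef_schurProduct (Matrix.le_iff.mp hvw) hK using 1
  ext1 α β
  simp only [Matrix.sub_apply, Matrix.of_apply, sub_smul]

end BlockOperators

section PolydiskPoisson
variable {ι : Type*} [Fintype ι] {w : ι → ℂ} (hw : ∀ i, w i ∈ Metric.ball 0 1)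
include hw

theorem smul_one_le_piKronecker_poissonMatrix :
    ((∏ i, (1 - ‖w i‖) / (1 + ‖w i‖) : ℝ) : ℂ) • 1 ≤
      piKronecker fun i => poissonMatrix (w i) := by
  rw [Complex.ofReal_prod, ← piKronecker_smul_one]
  exact piKronecker_mono (fun i => one_sub_div_one_add_smul_one_nonneg (hw i)) fun i =>
    smul_one_le_poissonMatrix (hw i)

theorem piKronecker_poissonMatrix_le_smul_one :
    piKronecker (fun i => poissonMatrix (w i)) ≤
      ((∏ i, (1 + ‖w i‖) / (1 - ‖w i‖) : ℝ) : ℂ) • 1 := by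
  rw [Complex.ofReal_prod, ← piKronecker_smul_one]
  exact piKronecker_mono (fun i => poissonMatrix_nonneg (hw i)) fun i =>
    poissonMatrix_le_smul_one (hw i)

end PolydiskPoisson

section RegularPolydisk

theorem defect_eq_iteratedDefect (X : Fin k → (H →L[ℂ] H)) :
    defect X = iteratedDefect X (List.finRange k) 1 := by
  rw [defect, List.ofFn_eq_map]
  induction List.finRange k with
  | nil => rfl
  | cons i l ih => simp [iteratedDefect, ih, star_eq_adjoint]

theorem posSemidef_toeplitzKernel_of_memClosedPolydisk {X : Fin k → (H →L[ℂ] H)}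
    (hX : memClosedPolydisk X) : (toeplitzKernel X (List.finRange k) 1).PosSemidef := by
  have hlim : Tendsto (fun s : ℝ => toeplitzKernel (fun i => (s : ℂ) • X i) (List.finRange k) 1)
      (𝓝[<] 1) (𝓝 (toeplitzKernel X (List.finRange k) 1)) := by
    have hcont : Continuous fun s : ℝ =>
        toeplitzKernel (fun i => (s : ℂ) • X i) (List.finRange k) 1 :=
      (continuous_toeplitzKernel _ _).comp (by fun_prop)
    simpa using (hcont.tendsto 1).mono_left nhdsWithin_le_nhds
  refine posSemidef_of_tendsto hlim ?_
  filter_upwards [Ioo_mem_nhdsLT one_pos] with s hs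
  obtain ⟨hcomm, hnorm, hpos, -⟩ := hX.2.2 s hs
  rw [defect_eq_iteratedDefect, ← nonneg_iff_isPositive] at hpos
  exact posSemidef_toeplitzKernel hcomm hnorm hpos

theorem IsPoissonKernel.hasBlockMatrix {X : Fin k → (H →L[ℂ] H)}
    (hcomm : ∀ i j, Commute (X i) (X j)) {r : ℝ} {T : L2 k H →L[ℂ] L2 k H}
    (hT : IsPoissonKernel X r T) :
    HasBlockMatrix T (Matrix.of fun α β => piKronecker (fun _ => poissonMatrix r) α β •
      toeplitzKernel X (List.finRange k) 1 α β) := fun α β h ℓ => by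
  have hr : piKronecker (fun _ => poissonMatrix r) α β =
      ((r ^ ∑ i, ((α i - β i) + (β i - α i)) : ℝ) : ℂ) := by
    simp [piKronecker, poissonMatrix, ← pow_add, Finset.prod_pow_eq_pow_sum]
  rw [hT α β h ℓ, Matrix.of_apply, hr, toeplitzKernel_one_apply hcomm, List.ofFn_eq_map,
    List.ofFn_eq_map, smul_apply, inner_smul_left, Complex.conj_ofReal]
  rfl

end RegularPolydisk

/-- Harnack inequality for the pluriharmonic Poisson kernel: for
`X ∈ D^k(H)⁻` and `r ∈ [0,1)`,
`((1-r)/(1+r))^k • I ≤ 𝒫(R, rX) ≤ ((1+r)/(1-r))^k • I`. -/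
theorem stmt_19 (hk : 1 ≤ k) (X : Fin k → (H →L[ℂ] H)) (hX : memClosedPolydisk X)
    (P : ℝ → (L2 k H →L[ℂ] L2 k H))
    (hP : ∀ r ∈ Set.Ico (0 : ℝ) 1, IsPoissonKernel X r (P r)) :
    ∀ r ∈ Set.Ico (0 : ℝ) 1,
      opLE (((((1 - r) / (1 + r)) ^ k : ℝ) : ℂ) • (1 : L2 k H →L[ℂ] L2 k H)) (P r) ∧
      opLE (P r) (((((1 + r) / (1 - r)) ^ k : ℝ) : ℂ) • (1 : L2 k H →L[ℂ] L2 k H)) := by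
  intro r hr
  have hw : ∀ _ : Fin k, (r : ℂ) ∈ Metric.ball 0 1 := fun _ => by
    simpa [abs_of_nonneg hr.1] using hr.2
  have hlower : ((((1 - r) / (1 + r)) ^ k : ℝ) : ℂ) • 1 ≤
      piKronecker fun _ : Fin k => poissonMatrix r := by
    simpa [div_pow, abs_of_nonneg hr.1] using smul_one_le_piKronecker_poissonMatrix hw
  have hupper : piKronecker (fun _ : Fin k => poissonMatrix r) ≤
      ((((1 + r) / (1 - r)) ^ k : ℝ) : ℂ) • 1 := by
    simpa [div_pow, abs_of_nonneg hr.1] using piKronecker_poissonMatrix_le_smul_one hw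
  have hK := posSemidef_toeplitzKernel_of_memClosedPolydisk hX
  have hone (c : ℂ) := hasBlockMatrix_smul_one c (toeplitzKernel_apply_self X (List.finRange k) 1)
  have hblock := (hP r hr).hasBlockMatrix hX.1
  exact ⟨(hone _).isPositive_sub_of_le hblock hlower hK,
    hblock.isPositive_sub_of_le (hone _) hupper hK⟩

end
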